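/- Let k be an algebraically closed field of characteristic zero, let p, q ≥ 1 be coprime natural numbers, let p', q' ∈ ℕ satisfy p·p' − q·q' = 1, let μ ∈ k \ {0}, and let P ∈ k[x,y] be nonzero. Set N = 𝔪_P(p,q) and let g(y) = P_{(p,q)}(μ^{q'}, y + μ^{p'}) ∈ k[y]. Suppose g vanishes at y = 0 to order exactly ν with ν ≥ 1 (i.e. μ is a root of the face polynomial of multiplicity ν). Then there exists a polynomial Q₁ ∈ k[x₁,y₁] such that σ_{(p,q,μ)}(P)(x₁,y₁) = x₁^{N} · Q₁(x₁,y₁), Q₁(0,0) = 0, and the one-variable polynomial y₁ ↦ Q₁(0,y₁) is nonzero and vanishes at y₁ = 0 to order exactly ν. -/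

import Mathlib

/-!
Under the Newton transformation a monomial `c x^a y^b` of `P` becomes
`c μ^{q' a} x₁^{p a + q b} (y₁ + μ^{p'})^b`, and `p a + q b ≥ N = 𝔪_P(p,q)` on the support.
Hence `x₁^N` divides the transform (`newtonTransform_eq_mul`), with an explicit quotient
`newtonQuotient`. At `x₁ = 0` only the terms with `p a + q b = N` survive in the quotient, so
its restriction is `P_{(p,q)}(μ^{q'}, y₁ + μ^{p'})` (`aeval_newtonQuotient`); nonvanishing and
order at `0` are thus those of the face polynomial, and `ν ≥ 1` gives the zero at the origin.
-/

open MvPolynomial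

variable {k : Type*} [Field k]

/-- The Newton transformation `σ_{(p,q,μ)}` (with auxiliary exponents `p', q'`):
`σ_{(p,q,μ)}(P)(x₁,y₁) = P(μ^{q'} x₁^p, x₁^q (y₁ + μ^{p'}))`. -/
noncomputable def newtonTransform (p q p' q' : ℕ) (μ : k)
    (P : MvPolynomial (Fin 2) k) : MvPolynomial (Fin 2) k :=
  MvPolynomial.aeval
    ![C (μ ^ q') * X 0 ^ p, X 0 ^ q * (X 1 + C (μ ^ p'))] P

/-- The support function value `𝔪_P(p,q) = min {p·a + q·b : (a,b) ∈ Supp P}`. -/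
noncomputable def mSupp (p q : ℕ) (P : MvPolynomial (Fin 2) k) : ℕ :=
  sInf {n : ℕ | ∃ d ∈ P.support, p * d 0 + q * d 1 = n}

/-- The face polynomial of `P` in direction `(p,q)`:
`P_{(p,q)} = Σ_{(a,b) ∈ Supp P, p·a + q·b = 𝔪_P(p,q)} c_{a,b} x^a y^b`. -/
noncomputable def facePoly (p q : ℕ) (P : MvPolynomial (Fin 2) k) :
    MvPolynomial (Fin 2) k :=
  ∑ d ∈ P.support.filter (fun d => p * d 0 + q * d 1 = mSupp p q P),
    monomial d (coeff d P)

/-- The weight `p a + q b` of a point of the support is at least `𝔪_P(p,q)`. -/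
lemma mSupp_le (p q : ℕ) (P : MvPolynomial (Fin 2) k) {d : Fin 2 →₀ ℕ} (hd : d ∈ P.support) :
    mSupp p q P ≤ p * d 0 + q * d 1 :=
  Nat.sInf_le ⟨d, hd, rfl⟩

/-- The quotient of `σ_{(p,q,μ)}(P)` by `x₁ ^ 𝔪_P(p,q)`, written monomial by monomial. The
truncated subtraction in the exponent is exact, by `mSupp_le`. -/
noncomputable def newtonQuotient (p q p' q' : ℕ) (μ : k) (P : MvPolynomial (Fin 2) k) :
    MvPolynomial (Fin 2) k :=
  ∑ d ∈ P.support, C (coeff d P) * (C (μ ^ q') ^ d 0 *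
    X 0 ^ (p * d 0 + q * d 1 - mSupp p q P) * (X 1 + C (μ ^ p')) ^ d 1)

lemma newtonTransform_eq_mul (p q p' q' : ℕ) (μ : k) (P : MvPolynomial (Fin 2) k) :
    newtonTransform p q p' q' μ P = X 0 ^ mSupp p q P * newtonQuotient p q p' q' μ P := by
  rw [newtonTransform, newtonQuotient, Finset.mul_sum, aeval_def, eval₂_eq']
  refine Finset.sum_congr rfl fun d hd => ?_
  obtain ⟨n, hn⟩ := Nat.exists_eq_add_of_le (mSupp_le p q P hd)
  have hX : (X 0 : MvPolynomial (Fin 2) k) ^ (p * d 0) * X 0 ^ (q * d 1)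
      = X 0 ^ mSupp p q P * X 0 ^ n := by
    rw [← pow_add, hn, pow_add]
  simp only [Fin.prod_univ_two, Matrix.cons_val_zero, Matrix.cons_val_one, algebraMap_eq,
    hn, Nat.add_sub_cancel_left, mul_pow, ← pow_mul]
  linear_combination C (coeff d P) * C (μ ^ q') ^ d 0 * (X 1 + C (μ ^ p')) ^ d 1 * hX

/-- Setting `x₁ = 0` kills exactly the terms off the face, leaving the face polynomial
evaluated at `(μ^{q'}, y + μ^{p'})`. -/
lemma aeval_newtonQuotient (p q p' q' : ℕ) (μ : k) (P : MvPolynomial (Fin 2) k) :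
    (aeval ![(0 : Polynomial k), Polynomial.X] (newtonQuotient p q p' q' μ P) : Polynomial k) =
      aeval ![Polynomial.C (μ ^ q'), Polynomial.X + Polynomial.C (μ ^ p')]
        (facePoly p q P) := by
  rw [newtonQuotient, facePoly, map_sum, map_sum, Finset.sum_filter]
  refine Finset.sum_congr rfl fun d hd => ?_
  have hle := mSupp_le p q P hd
  split_ifs with h
  · simp [h, aeval_monomial, Finsupp.prod_fintype, Fin.prod_univ_two, aeval_C,
      Polynomial.algebraMap_eq]
  · have hne : p * d 0 + q * d 1 - mSupp p q P ≠ 0 := by omega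
    simp [zero_pow hne]

/-- Lemma 2(3) of the Newton algorithm (root case): over an algebraically
closed field of characteristic zero, if `μ` is a root of multiplicity `ν ≥ 1`
of the face polynomial — that is, `g(y) = P_{(p,q)}(μ^{q'}, y + μ^{p'})`
vanishes at `y = 0` to order exactly `ν` — then
`σ_{(p,q,μ)}(P) = x₁^{N} · Q₁(x₁,y₁)` with `Q₁(0,0) = 0` and `Q₁(0,y₁)`
nonzero of valuation exactly `ν`, where `N = 𝔪_P(p,q)`. -/
theorem newtonTransform_root_case
    [IsAlgClosed k] [CharZero k]
    (p q p' q' : ℕ) (hp : 1 ≤ p) (hq : 1 ≤ q) (hpq : Nat.Coprime p q)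
    (hpp' : p * p' = q * q' + 1) (μ : k) (hμ : μ ≠ 0)
    (P : MvPolynomial (Fin 2) k) (hP : P ≠ 0) (ν : ℕ) (hν : 1 ≤ ν)
    (hg :
      (MvPolynomial.aeval
          ![Polynomial.C (μ ^ q'), Polynomial.X + Polynomial.C (μ ^ p')]
          (facePoly p q P) : Polynomial k) ≠ 0)
    (hmult :
      Polynomial.rootMultiplicity 0
        (MvPolynomial.aeval
          ![Polynomial.C (μ ^ q'), Polynomial.X + Polynomial.C (μ ^ p')]
          (facePoly p q P) : Polynomial k) = ν) :
    ∃ Q₁ : MvPolynomial (Fin 2) k,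
      newtonTransform p q p' q' μ P = X 0 ^ mSupp p q P * Q₁ ∧
      MvPolynomial.eval (fun _ => (0 : k)) Q₁ = 0 ∧
      (MvPolynomial.aeval ![(0 : Polynomial k), Polynomial.X] Q₁ :
        Polynomial k) ≠ 0 ∧
      Polynomial.rootMultiplicity 0
        (MvPolynomial.aeval ![(0 : Polynomial k), Polynomial.X] Q₁ :
          Polynomial k) = ν := by
  have hface := aeval_newtonQuotient p q p' q' μ P
  refine ⟨newtonQuotient p q p' q' μ P, newtonTransform_eq_mul p q p' q' μ P, ?_,
    hface ▸ hg, hface ▸ hmult⟩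
  have hroot : Polynomial.eval 0 (aeval ![(0 : Polynomial k), Polynomial.X]
      (newtonQuotient p q p' q' μ P)) = 0 := by
    rw [hface]
    exact (Polynomial.rootMultiplicity_pos hg).1 (by omega)
  -- Evaluating at the origin factors through the restriction to `x₁ = 0`.
  have hcomp : (Polynomial.evalRingHom (0 : k)).comp
      (aeval ![(0 : Polynomial k), Polynomial.X] : MvPolynomial (Fin 2) k →ₐ[k] _).toRingHom
      = eval (fun _ => (0 : k)) := by
    apply MvPolynomial.ringHom_ext
    · intro r
      simp
    · intro i
      fin_cases i <;> simp
  rw [← hcomp]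
  exact hroot
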